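/- Let L be a complete graded Lie algebra over ℚ concentrated in nonnegative degrees, and suppose there is an integer n ≥ 1 such that for all x₁, …, xₙ ∈ L₀ the composite (e^{ad_{x₁}} − id) ∘ ⋯ ∘ (e^{ad_{xₙ}} − id) = 0. Then ad_{x₁} ∘ ⋯ ∘ ad_{xₙ} = 0 for all x₁, …, xₙ ∈ L₀; in particular L₀ acts nilpotently on L by the adjoint action. -/

import Mathlib

namespace Paper

universe u

/-- Cast along an equality of degrees in a graded object. -/
def gcast {L : ℤ → Type u} {p q : ℤ} (h : p = q) (x : L p) : L q := h ▸ x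

/-- A complete graded Lie algebra over `ℚ`: a graded Lie algebra `L = {L_p}_{p ∈ ℤ}`
(graded antisymmetry and Jacobi identity with Koszul signs), equipped with a decreasing
filtration `L = F¹ ⊇ F² ⊇ ⋯` of Lie ideals satisfying `[F^m, F^n] ⊆ F^{m+n}`, which is
Hausdorff and complete: series with terms of increasing filtration degree converge, and
the limits are unique (equivalently, `L ≅ lim_n L/Fⁿ`).  Completeness guarantees the
convergence of the operator series `e^{ad_x}` for `x ∈ L₀`, and of the
Baker–Campbell–Hausdorff product `x * y = log(eˣeʸ)` on `L₀`; the latter is supplied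
together with its group laws and its characterizing first-order approximation. -/
structure CompleteGradedLie : Type (u + 1) where
  /-- the degree-`p` component -/
  L : ℤ → Type u
  [acg : ∀ p, AddCommGroup (L p)]
  [mod : ∀ p, Module ℚ (L p)]
  /-- the graded Lie bracket -/
  br : ∀ {p q : ℤ}, L p → L q → L (p + q)
  br_add_left : ∀ {p q : ℤ} (x y : L p) (z : L q), br (x + y) z = br x z + br y z
  br_add_right : ∀ {p q : ℤ} (x : L p) (y z : L q), br x (y + z) = br x y + br x z
  br_smul_left : ∀ {p q : ℤ} (c : ℚ) (x : L p) (z : L q), br (c • x) z = c • br x z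
  br_smul_right : ∀ {p q : ℤ} (c : ℚ) (x : L p) (z : L q), br x (c • z) = c • br x z
  /-- graded antisymmetry -/
  br_antisymm : ∀ {p q : ℤ} (x : L p) (y : L q),
    br x y = -((-1 : ℚ) ^ (p * q) • gcast (L := L) (add_comm q p) (br y x))
  /-- graded Jacobi identity -/
  br_jacobi : ∀ {p q r : ℤ} (x : L p) (y : L q) (z : L r),
    br x (br y z) = gcast (L := L) (add_assoc p q r) (br (br x y) z)
      + (-1 : ℚ) ^ (p * q) • gcast (L := L) (add_left_comm q p r) (br y (br x z))
  /-- the filtration -/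
  F : ℕ → ∀ p : ℤ, Submodule ℚ (L p)
  F_one : ∀ p, F 1 p = ⊤
  F_antitone : ∀ {m n : ℕ}, m ≤ n → ∀ p, F n p ≤ F m p
  F_br : ∀ {m n : ℕ} {p q : ℤ} {x : L p} {y : L q},
    x ∈ F m p → y ∈ F n q → br x y ∈ F (m + n) (p + q)
  /-- the filtration is Hausdorff -/
  hausdorff : ∀ (p : ℤ) (x : L p), (∀ n, x ∈ F n p) → x = 0
  /-- the filtration is complete: series with terms of increasing filtration
  degree converge -/
  complete : ∀ (p : ℤ) (a : ℕ → L p), (∀ n, a n ∈ F n p) →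
    ∃ x : L p, ∀ n, x - (∑ k ∈ Finset.range n, a k) ∈ F n p
  /-- the Baker–Campbell–Hausdorff product `bch x y = log(eˣeʸ)` on `L₀`,
  convergent by completeness -/
  bch : L 0 → L 0 → L 0
  bch_assoc : ∀ x y z, bch (bch x y) z = bch x (bch y z)
  bch_zero_left : ∀ x, bch 0 x = x
  bch_zero_right : ∀ x, bch x 0 = x
  bch_neg_left : ∀ x, bch (-x) x = 0
  /-- `bch x y = x + y + ½[x,y] + ⋯` agrees with `x + y` modulo `F²` -/
  bch_approx : ∀ x y, bch x y - (x + y) ∈ F 2 0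

attribute [instance] CompleteGradedLie.acg CompleteGradedLie.mod

namespace CompleteGradedLie

variable (S : CompleteGradedLie.{u})

/-- The group structure on `L₀` given by the Baker–Campbell–Hausdorff product. -/
def bchGroup : Group (S.L 0) where
  mul := S.bch
  one := 0
  inv x := -x
  mul_assoc := S.bch_assoc
  one_mul := S.bch_zero_left
  mul_one := S.bch_zero_right
  inv_mul_cancel := S.bch_neg_left

/-- The bracket of two degree-zero elements, landing again in degree zero. -/
def br0 (x y : S.L 0) : S.L 0 := gcast (L := S.L) (zero_add 0) (S.br x y)

/-- The adjoint operator `ad_x = [x, ·] : L_p → L_p` of a degree-zero element. -/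
def ad (x : S.L 0) {p : ℤ} (y : S.L p) : S.L p := gcast (L := S.L) (zero_add p) (S.br x y)

/-- Iterates `ad_x^k` of the adjoint operator of a degree-zero element. -/
def adIter (x : S.L 0) {p : ℤ} : ℕ → S.L p → S.L p
  | 0, y => y
  | k + 1, y => S.ad x (adIter x k y)

/-- The iterated adjoint action `ad_{x₁} ∘ ⋯ ∘ ad_{xₖ}` of a list of degree-zero
elements. -/
def adList {p : ℤ} : List (S.L 0) → S.L p → S.L p
  | [], y => y
  | x :: xs, y => S.ad x (adList xs y)

/-- The iterated bracket `[x₁, [x₂, ⋯ [xₖ, y] ⋯ ]]` in degree zero. -/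
def nestedBr : List (S.L 0) → S.L 0 → S.L 0
  | [], y => y
  | x :: xs, y => S.br0 x (nestedBr xs y)

lemma gcast_mem {p q : ℤ} (h : p = q) {n : ℕ} {x : S.L p} (hx : x ∈ S.F n p) :
    gcast (L := S.L) h x ∈ S.F n q := by subst h; exact hx

lemma mem_F_one {p : ℤ} (x : S.L p) : x ∈ S.F 1 p := by rw [S.F_one]; trivial

lemma adIter_mem (x : S.L 0) {p : ℤ} (k : ℕ) (y : S.L p) :
    S.adIter x k y ∈ S.F (k + 1) p := by
  induction k with
  | zero => simpa [adIter] using S.mem_F_one y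
  | succ k ih =>
      have h := S.F_br (S.mem_F_one x) ih
      have h2 : gcast (L := S.L) (zero_add p) (S.br x (S.adIter x k y))
          ∈ S.F (1 + (k + 1)) p := S.gcast_mem _ h
      have h3 : (1 + (k + 1)) = (k + 1 + 1) := by omega
      rw [h3] at h2
      simpa [adIter, ad] using h2

/-- The operator `e^{ad_x} = Σ_k ad_x^k / k!` on `L_p`, for `x ∈ L₀`; the series
converges by completeness of the filtration. -/
noncomputable def expAd (x : S.L 0) {p : ℤ} (y : S.L p) : S.L p :=
  Classical.choose (S.complete p
    (fun k => ((Nat.factorial k : ℚ))⁻¹ • S.adIter x k y)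
    (fun k => Submodule.smul_mem _ _
      (S.F_antitone (Nat.le_succ k) p (S.adIter_mem x k y))))

/-- The operator `φ_x = e^{ad_x} − id`. -/
noncomputable def phi (x : S.L 0) {p : ℤ} (y : S.L p) : S.L p := S.expAd x y - y

/-- The iterated composite `φ_{x₁} ∘ ⋯ ∘ φ_{xₖ}` of operators `φ_x = e^{ad_x} − id`. -/
noncomputable def phiList {p : ℤ} : List (S.L 0) → S.L p → S.L p
  | [], y => y
  | x :: xs, y => S.phi x (phiList xs y)

/-- The lower central series `L¹ = L ⊇ L² ⊇ ⋯`, `Lⁿ = [L, Lⁿ⁻¹]`, of a graded Lie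
algebra (as a family of graded subspaces; `lcs 0` is by convention the whole algebra). -/
def lcs : ℕ → ∀ p : ℤ, Submodule ℚ (S.L p)
  | 0, _ => ⊤
  | 1, _ => ⊤
  | n + 2, p => Submodule.span ℚ
      {z : S.L p | ∃ (q r : ℤ) (h : q + r = p) (x : S.L q) (y : S.L r),
        y ∈ lcs (n + 1) r ∧ z = gcast (L := S.L) h (S.br x y)}

/-- `L` is connected: concentrated in nonnegative degrees. -/
def ConnectedCGL : Prop := ∀ p : ℤ, p < 0 → ∀ x : S.L p, x = 0

/-- `L₀` is a nilpotent group under the Baker–Campbell–Hausdorff product. -/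
def BCHNilpotent : Prop := @Group.IsNilpotent (S.L 0) S.bchGroup

/-- The exponential action `(α, β) ↦ e^{ad_α}(β)` of `L₀` on `L` is nilpotent:
some `n`-fold composite of the operators `φ_x = e^{ad_x} − id` vanishes identically. -/
def ExpActionNilpotent : Prop :=
  ∃ n : ℕ, 1 ≤ n ∧ ∀ xs : List (S.L 0), xs.length = n →
    ∀ (p : ℤ) (y : S.L p), S.phiList xs y = 0

/-- `L₀` is a nilpotent Lie algebra: all iterated brackets of some length `n` vanish. -/
def LieNilpotent0 : Prop :=
  ∃ n : ℕ, 1 ≤ n ∧ ∀ (xs : List (S.L 0)) (y : S.L 0),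
    xs.length + 1 = n → S.nestedBr xs y = 0

/-- `L₀` acts nilpotently on `L` via the adjoint action: some `n`-fold composite
`ad_{x₁} ∘ ⋯ ∘ ad_{xₙ}` vanishes identically. -/
def AdActionNilpotent : Prop :=
  ∃ n : ℕ, 1 ≤ n ∧ ∀ xs : List (S.L 0), xs.length = n →
    ∀ (p : ℤ) (y : S.L p), S.adList xs y = 0

/-- `L` is degreewise nilpotent: for each degree `p` there is `n ≥ 1` with `Lⁿ_p = 0`. -/
def DegreewiseNilpotent : Prop :=
  ∀ p : ℤ, ∃ n : ℕ, 1 ≤ n ∧ S.lcs n p = ⊥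

end CompleteGradedLie

end Paper

namespace Paper

namespace CompleteGradedLie

lemma aux_gcast_add {L : ℤ → Type u} [∀ p, AddCommGroup (L p)] {p q : ℤ} (h : p = q)
    (x y : L p) : gcast (L := L) h (x + y) = gcast (L := L) h x + gcast (L := L) h y := by
  subst h; rfl

lemma aux_gcast_smul {L : ℤ → Type u} [∀ p, AddCommGroup (L p)] [∀ p, Module ℚ (L p)]
    {p q : ℤ} (h : p = q) (c : ℚ) (x : L p) :
    gcast (L := L) h (c • x) = c • gcast (L := L) h x := by
  subst h; rfl

lemma aux_ad_add (S : CompleteGradedLie.{u}) (x : S.L 0) {p : ℤ} (y z : S.L p) :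
    S.ad x (y + z) = S.ad x y + S.ad x z := by
  simp only [ad, S.br_add_right, aux_gcast_add]

lemma aux_ad_smul (S : CompleteGradedLie.{u}) (x : S.L 0) {p : ℤ} (c : ℚ) (y : S.L p) :
    S.ad x (c • y) = c • S.ad x y := by
  simp only [ad, S.br_smul_right, aux_gcast_smul]

lemma aux_ad_smul_left (S : CompleteGradedLie.{u}) (x : S.L 0) {p : ℤ} (c : ℚ) (y : S.L p) :
    S.ad (c • x) y = c • S.ad x y := by
  simp only [ad, S.br_smul_left, aux_gcast_smul]

lemma aux_ad_mem (S : CompleteGradedLie.{u}) (x : S.L 0) {p : ℤ} {n : ℕ} {y : S.L p}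
    (hy : y ∈ S.F n p) : S.ad x y ∈ S.F n p :=
  S.F_antitone (Nat.le_add_left n 1) p (S.gcast_mem _ (S.F_br (S.mem_F_one x) hy))

lemma aux_adIter_add (S : CompleteGradedLie.{u}) (x : S.L 0) {p : ℤ} (k : ℕ) (y z : S.L p) :
    S.adIter x k (y + z) = S.adIter x k y + S.adIter x k z := by
  induction k with
  | zero => rfl
  | succ k ih => simp only [adIter, ih, aux_ad_add]

lemma aux_adIter_smul (S : CompleteGradedLie.{u}) (x : S.L 0) {p : ℤ} (k : ℕ) (c : ℚ)
    (y : S.L p) : S.adIter x k (c • y) = c • S.adIter x k y := by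
  induction k with
  | zero => rfl
  | succ k ih => simp only [adIter, ih, aux_ad_smul]

lemma aux_adIter_smul_left (S : CompleteGradedLie.{u}) (x : S.L 0) {p : ℤ} (k : ℕ) (c : ℚ)
    (y : S.L p) : S.adIter (c • x) k y = c ^ k • S.adIter x k y := by
  induction k with
  | zero => simp [adIter]
  | succ k ih => simp only [adIter, ih, aux_ad_smul, aux_ad_smul_left, smul_smul, pow_succ]

lemma aux_adIter_mem (S : CompleteGradedLie.{u}) (x : S.L 0) {p : ℤ} (k : ℕ) {n : ℕ}
    {y : S.L p} (hy : y ∈ S.F n p) : S.adIter x k y ∈ S.F n p := by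
  induction k with
  | zero => exact hy
  | succ k ih => exact S.aux_ad_mem x ih

lemma aux_expAd_spec (S : CompleteGradedLie.{u}) (x : S.L 0) {p : ℤ} (y : S.L p) (n : ℕ) :
    S.expAd x y - ∑ k ∈ Finset.range n, ((Nat.factorial k : ℚ))⁻¹ • S.adIter x k y
      ∈ S.F n p :=
  Classical.choose_spec (S.complete p
    (fun k => ((Nat.factorial k : ℚ))⁻¹ • S.adIter x k y)
    (fun k => Submodule.smul_mem _ _
      (S.F_antitone (Nat.le_succ k) p (S.adIter_mem x k y)))) n

lemma aux_expAd_add (S : CompleteGradedLie.{u}) (x : S.L 0) {p : ℤ} (y z : S.L p) :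
    S.expAd x (y + z) = S.expAd x y + S.expAd x z := by
  rw [← sub_eq_zero]
  apply S.hausdorff
  intro n
  have h := Submodule.sub_mem _ (S.aux_expAd_spec x (y + z) n)
    (Submodule.add_mem _ (S.aux_expAd_spec x y n) (S.aux_expAd_spec x z n))
  convert h using 1
  simp only [aux_adIter_add, smul_add, Finset.sum_add_distrib]
  abel

lemma aux_expAd_smul (S : CompleteGradedLie.{u}) (x : S.L 0) {p : ℤ} (c : ℚ) (y : S.L p) :
    S.expAd x (c • y) = c • S.expAd x y := by
  rw [← sub_eq_zero]
  apply S.hausdorff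
  intro n
  have h := Submodule.sub_mem _ (S.aux_expAd_spec x (c • y) n)
    (Submodule.smul_mem _ c (S.aux_expAd_spec x y n))
  convert h using 1
  simp only [aux_adIter_smul, smul_sub, Finset.smul_sum, smul_comm c]
  abel

lemma aux_expAd_mem (S : CompleteGradedLie.{u}) (x : S.L 0) {p : ℤ} {n : ℕ}
    {y : S.L p} (hy : y ∈ S.F n p) : S.expAd x y ∈ S.F n p := by
  rw [← Submodule.sub_mem_iff_left _ (Submodule.sum_mem _ fun k _ =>
    Submodule.smul_mem _ _ (S.aux_adIter_mem x k hy))]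
  exact S.aux_expAd_spec x y n

/-- `φ_{x₁} ∘ ⋯ ∘ φ_{xₖ}` as a linear map. -/
noncomputable def auxPhi (S : CompleteGradedLie.{u}) (p : ℤ) (xs : List (S.L 0)) :
    S.L p →ₗ[ℚ] S.L p where
  toFun := S.phiList xs
  map_add' y z := by
    induction xs with
    | nil => rfl
    | cons x xs ih => simp only [phiList, phi, ih, aux_expAd_add]; abel
  map_smul' c y := by
    induction xs with
    | nil => rfl
    | cons x xs ih =>
      simp only [RingHom.id_apply] at ih
      simp only [phiList, phi, ih, aux_expAd_smul, smul_sub, RingHom.id_apply]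

lemma aux_phiList_mem (S : CompleteGradedLie.{u}) (xs : List (S.L 0)) {p : ℤ} {n : ℕ}
    {y : S.L p} (hy : y ∈ S.F n p) : S.phiList xs y ∈ S.F n p := by
  induction xs with
  | nil => exact hy
  | cons x xs ih => exact Submodule.sub_mem _ (S.aux_expAd_mem x ih) ih

lemma aux_phiList_append (S : CompleteGradedLie.{u}) (xs ys : List (S.L 0)) {p : ℤ}
    (y : S.L p) : S.phiList (xs ++ ys) y = S.phiList xs (S.phiList ys y) := by
  induction xs with
  | nil => rfl
  | cons x xs ih => simp only [List.cons_append, phiList, ih]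

/-- The elements killed by all `j`-fold composites of operators `φ_x`. -/
noncomputable def auxK (S : CompleteGradedLie.{u}) (p : ℤ) (j : ℕ) : Submodule ℚ (S.L p) :=
  ⨅ xs : {xs : List (S.L 0) // xs.length = j}, LinearMap.ker (S.auxPhi p xs.1)

lemma aux_mem_K (S : CompleteGradedLie.{u}) {p : ℤ} {j : ℕ} {y : S.L p} :
    y ∈ S.auxK p j ↔ ∀ xs : List (S.L 0), xs.length = j → S.phiList xs y = 0 := by
  simp [auxK, auxPhi]

lemma aux_K_closed (S : CompleteGradedLie.{u}) {p : ℤ} {j : ℕ} {y : S.L p}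
    (h : ∀ n, y ∈ S.auxK p j ⊔ S.F n p) : y ∈ S.auxK p j := by
  rw [aux_mem_K]
  intro xs hxs
  apply S.hausdorff
  intro n
  obtain ⟨a, ha, b, hb, rfl⟩ := Submodule.mem_sup.1 (h n)
  have h1 : S.phiList xs (a + b) = S.phiList xs a + S.phiList xs b :=
    (S.auxPhi p xs).map_add a b
  rw [h1, S.aux_mem_K.1 ha xs hxs, zero_add]
  exact S.aux_phiList_mem xs hb

/-- A polynomial with vector coefficients vanishing at all rationals has zero coefficients. -/
lemma aux_poly {V : Type*} [AddCommGroup V] [Module ℚ V] (N : ℕ) (a : ℕ → V)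
    (h : ∀ t : ℚ, ∑ k ∈ Finset.range N, t ^ k • a k = 0) (k : ℕ) (hk : k < N) : a k = 0 := by
  rw [← Module.forall_dual_apply_eq_zero_iff ℚ]
  intro f
  have h1 : (∑ k ∈ Finset.range N, Polynomial.monomial k (f (a k))) = 0 := by
    apply Polynomial.funext
    intro t
    have := congrArg f (h t)
    simp only [map_sum, map_smul, smul_eq_mul, map_zero] at this
    simp only [Polynomial.eval_finsetSum, Polynomial.eval_monomial, Polynomial.eval_zero]
    rw [← this]
    exact Finset.sum_congr rfl fun _ _ => mul_comm _ _
  have h2 := congrArg (fun P => Polynomial.coeff P k) h1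
  simpa [Polynomial.finsetSum_coeff, Polynomial.coeff_monomial, hk] using h2

lemma aux_ad_K (S : CompleteGradedLie.{u}) {p : ℤ} {j : ℕ} {y : S.L p}
    (hy : y ∈ S.auxK p (j + 1)) (x : S.L 0) : S.ad x y ∈ S.auxK p j := by
  have hphi : ∀ t : ℚ, S.phi (t • x) y ∈ S.auxK p j := by
    intro t
    rw [aux_mem_K] at hy ⊢
    intro xs hxs
    have := hy (xs ++ [t • x]) (by simp [hxs])
    rwa [aux_phiList_append] at this
  apply aux_K_closed
  intro n
  suffices hs : S.ad x y ∈ S.auxK p j ⊔ S.F (n + 2) p from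
    (sup_le_sup_left (S.F_antitone (Nat.le_add_right n 2) p) _) hs
  set W := S.auxK p j ⊔ S.F (n + 2) p with hW
  have key := aux_poly (V := S.L p ⧸ W) (n + 2)
    (fun k => if k = 0 then 0 else W.mkQ (((Nat.factorial k : ℚ))⁻¹ • S.adIter x k y)) ?_ 1
    (by omega)
  · have : W.mkQ (S.ad x y) = 0 := by simpa [adIter] using key
    simpa using this
  · intro t
    have h1 : S.phi (t • x) y ∈ W := (le_sup_left : S.auxK p j ≤ W) (hphi t)
    have h2 := (le_sup_right : S.F (n + 2) p ≤ W) (S.aux_expAd_spec (t • x) y (n + 2))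
    have h3 := W.sub_mem h1 h2
    rw [← Submodule.Quotient.mk_eq_zero, ← Submodule.mkQ_apply] at h3
    refine Eq.trans ?_ h3
    have h4 : S.phi (t • x) y - (S.expAd (t • x) y - ∑ k ∈ Finset.range (n + 2),
        ((Nat.factorial k : ℚ))⁻¹ • S.adIter (t • x) k y) =
        ∑ k ∈ Finset.range (n + 1),
          ((Nat.factorial (k + 1) : ℚ))⁻¹ • S.adIter (t • x) (k + 1) y := by
      rw [phi, Finset.sum_range_succ']
      simp only [Nat.factorial_zero, Nat.cast_one, inv_one, one_smul, adIter]
      abel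
    rw [h4, Finset.sum_range_succ', map_sum]
    simp only [if_true, smul_zero, add_zero, Nat.add_eq_zero_iff, one_ne_zero, and_false,
      if_false]
    refine Finset.sum_congr rfl fun k _ => ?_
    rw [aux_adIter_smul_left, smul_comm, map_smul, map_smul, map_smul]

lemma aux_adList_K (S : CompleteGradedLie.{u}) {p : ℤ} (xs : List (S.L 0)) (j : ℕ) (y : S.L p)
    (hy : y ∈ S.auxK p (j + xs.length)) : S.adList xs y ∈ S.auxK p j := by
  induction xs generalizing j with
  | nil => exact hy
  | cons x xs ih =>
    apply aux_ad_K
    apply ih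
    convert hy using 2
    simp only [List.length_cons]
    omega

end CompleteGradedLie

/-- **Lemma (from the proof of Proposition `nilpo`).** Let `L` be a complete graded Lie
algebra over `ℚ` concentrated in nonnegative degrees, and suppose there is `n ≥ 1` such
that all `n`-fold composites `(e^{ad_{x₁}} − id) ∘ ⋯ ∘ (e^{ad_{xₙ}} − id)` with
`x₁, …, xₙ ∈ L₀` vanish identically.  Then all `n`-fold composites
`ad_{x₁} ∘ ⋯ ∘ ad_{xₙ}` vanish identically; in particular `L₀` acts nilpotently on `L`
by the adjoint action. -/
theorem CompleteGradedLie.adjoint_nilpotent_of_exp_nilpotent (S : CompleteGradedLie.{u})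
    (hconn : S.ConnectedCGL) (n : ℕ) (hn : 1 ≤ n)
    (h : ∀ xs : List (S.L 0), xs.length = n → ∀ (p : ℤ) (y : S.L p), S.phiList xs y = 0) :
    (∀ xs : List (S.L 0), xs.length = n → ∀ (p : ℤ) (y : S.L p), S.adList xs y = 0) ∧
      S.AdActionNilpotent := by
  have main : ∀ xs : List (S.L 0), xs.length = n → ∀ (p : ℤ) (y : S.L p), S.adList xs y = 0 := by
    intro xs hxs p y
    have h0 := S.aux_adList_K xs 0 y (by
      rw [S.aux_mem_K]
      intro ys hys
      exact h ys (by omega) p y)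
    exact S.aux_mem_K.1 h0 [] rfl
  exact ⟨main, n, hn, main⟩

end Paper
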